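/- Let I ⊆ ℝ be a nondegenerate interval, n ∈ ℕ, and let ω be an n-dimensional positive Chebyshev system over I. If a function f : I → ℝ is ω-Jensen convex on I, then f is (r,ω)-convex on I for every r ∈ ℚ₊ⁿ (every n-tuple of positive rationals). -/

import Mathlib

/-- `Phi ω x` is the determinant `det(ωᵢ(xⱼ))` of an `n`-tuple of functions
evaluated at an `n`-tuple of points. -/
noncomputable def Phi {n : ℕ} (ω : Fin n → ℝ → ℝ) (x : Fin n → ℝ) : ℝ :=
  (Matrix.of fun i j => ω i (x j)).det

/-- `ω` is an `n`-dimensional positive Chebyshev system over `H`: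
`Phi ω` is positive on all strictly increasing `n`-tuples of elements of `H`. -/
def IsPosChebyshev {n : ℕ} (ω : Fin n → ℝ → ℝ) (H : Set ℝ) : Prop :=
  ∀ x : Fin n → ℝ, StrictMono x → (∀ j, x j ∈ H) → 0 < Phi ω x

/-- The partial sum `t₁ + ⋯ + tⱼ` (empty for `j = 0`, everything for `j = n`). -/
noncomputable def psum {n : ℕ} (t : Fin n → ℝ) (j : Fin (n + 1)) : ℝ :=
  ∑ i ∈ Finset.univ.filter (fun i : Fin n => (i : ℕ) < (j : ℕ)), t i

/-- `f` is `(t,ω)`-convex on `J`: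
`Φ_{(ω,f)}(x, x+t₁h, x+(t₁+t₂)h, …, x+(t₁+⋯+tₙ)h) ≥ 0`
for all `x ∈ J` and `h > 0` with `x+(t₁+⋯+tₙ)h ∈ J`. -/
def TOmegaConvexOn {n : ℕ} (ω : Fin n → ℝ → ℝ) (t : Fin n → ℝ) (J : Set ℝ) (f : ℝ → ℝ) : Prop :=
  ∀ x ∈ J, ∀ h : ℝ, 0 < h → x + psum t (Fin.last n) * h ∈ J →
    0 ≤ Phi (Fin.snoc ω f) (fun j => x + psum t j * h)

lemma Phi_snoc_expand {n : ℕ} (ω : Fin n → ℝ → ℝ) (f : ℝ → ℝ) (s : Fin (n + 1) → ℝ) :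
    Phi (Fin.snoc ω f : Fin (n + 1) → ℝ → ℝ) s
      = ∑ j : Fin (n + 1), (-1) ^ (n + (j : ℕ)) * f (s j) * Phi ω (fun i => s (j.succAbove i)) := by
  unfold Phi
  rw [Matrix.det_succ_row _ (Fin.last n)]
  refine Finset.sum_congr rfl fun j _ => ?_
  congr 1
  · simp
  · congr 1
    ext a b
    simp [Matrix.submatrix]

lemma Phi_snoc_mem {n : ℕ} (ω : Fin n → ℝ → ℝ) (i : Fin n) (s : Fin (n + 1) → ℝ) :
    Phi (Fin.snoc ω (ω i) : Fin (n + 1) → ℝ → ℝ) s = 0 := by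
  unfold Phi
  refine Matrix.det_zero_of_row_eq (i := i.castSucc) (j := Fin.last n)
    (Fin.castSucc_lt_last i).ne ?_
  ext b
  simp

lemma Phi_snoc_sub {n : ℕ} (ω : Fin n → ℝ → ℝ) (f : ℝ → ℝ) (c : Fin n → ℝ)
    (s : Fin (n + 1) → ℝ) :
    Phi (Fin.snoc ω (fun u => f u - ∑ i, c i * ω i u) : Fin (n + 1) → ℝ → ℝ) s
      = Phi (Fin.snoc ω f : Fin (n + 1) → ℝ → ℝ) s := by
  have h0 : ∑ i, c i * Phi (Fin.snoc ω (ω i) : Fin (n + 1) → ℝ → ℝ) s = 0 := by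
    simp [Phi_snoc_mem]
  simp only [Phi_snoc_expand] at h0 ⊢
  rw [← sub_zero (∑ j : Fin (n + 1), (-1) ^ (n + (j : ℕ)) * f (s j) * _), ← h0]
  simp only [Finset.mul_sum]
  rw [Finset.sum_comm, ← Finset.sum_sub_distrib]
  refine Finset.sum_congr rfl fun j _ => ?_
  rw [mul_sub, sub_mul, Finset.mul_sum, Finset.sum_mul]
  congr 1
  refine Finset.sum_congr rfl fun i _ => ?_
  ring

lemma exists_interp {n : ℕ} (ω : Fin n → ℝ → ℝ) (f : ℝ → ℝ) (y : Fin n → ℝ)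
    (hy : Phi ω y ≠ 0) : ∃ c : Fin n → ℝ, ∀ j, f (y j) - ∑ i, c i * ω i (y j) = 0 := by
  set M : Matrix (Fin n) (Fin n) ℝ := Matrix.of fun i j => ω i (y j) with hM
  have hu : IsUnit M.det := isUnit_iff_ne_zero.mpr hy
  refine ⟨Matrix.vecMul (fun j => f (y j)) M⁻¹, fun j => ?_⟩
  have h : Matrix.vecMul (Matrix.vecMul (fun j => f (y j)) M⁻¹) M = fun j => f (y j) := by
    rw [Matrix.vecMul_vecMul, Matrix.nonsing_inv_mul _ hu, Matrix.vecMul_one]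
  have := congrFun h j
  rw [sub_eq_zero, ← this]
  rfl

lemma Phi_core {n : ℕ} (ω : Fin n → ℝ → ℝ) (I : Set ℝ) (hω : IsPosChebyshev ω I) (f : ℝ → ℝ)
    (z : Fin (n + 2) → ℝ) (hz : StrictMono z) (hzI : ∀ j, z j ∈ I) (k : Fin (n + 2))
    (hk0 : k ≠ 0) (hkl : k ≠ Fin.last (n + 1))
    (h1 : 0 ≤ Phi (Fin.snoc ω f : Fin (n + 1) → ℝ → ℝ) (fun j => z j.castSucc))
    (h2 : 0 ≤ Phi (Fin.snoc ω f : Fin (n + 1) → ℝ → ℝ) (fun j => z j.succ)) :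
    0 ≤ Phi (Fin.snoc ω f : Fin (n + 1) → ℝ → ℝ) (fun j => z (k.succAbove j)) := by
  have hpos : ∀ e : Fin n → Fin (n + 2), StrictMono e → 0 < Phi ω (fun i => z (e i)) :=
    fun e he => hω _ (hz.comp he) (fun j => hzI _)
  obtain ⟨c, hc⟩ := exists_interp ω f (fun i => z i.castSucc.succ)
    (hpos _ (fun a b h => by simpa using h)).ne'
  obtain ⟨g, hgF, hc⟩ : ∃ g : ℝ → ℝ,
      (∀ s, Phi (Fin.snoc ω g : Fin (n + 1) → ℝ → ℝ) s
        = Phi (Fin.snoc ω f : Fin (n + 1) → ℝ → ℝ) s) ∧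
      ∀ i : Fin n, g (z i.castSucc.succ) = 0 := ⟨_, Phi_snoc_sub ω f c, hc⟩
  rw [← hgF, Phi_snoc_expand] at h1 h2 ⊢
  have hg0 : ∀ i : Fin (n + 2), i ≠ 0 → i ≠ Fin.last (n + 1) → g (z i) = 0 := by
    intro i hi hi'
    obtain ⟨i', rfl⟩ := Fin.exists_succ_eq.mpr hi
    have : i' ≠ Fin.last n := by rintro rfl; exact hi' rfl
    obtain ⟨i'', rfl⟩ := Fin.exists_castSucc_eq.mpr this
    exact hc i''
  have hA : 0 ≤ (-1) ^ n * g (z 0) := by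
    rw [Finset.sum_eq_single 0] at h1
    · refine nonneg_of_mul_nonneg_left (by simpa using h1)
        (hpos (fun i => ((0 : Fin (n + 1)).succAbove i).castSucc)
          (fun a b h => by simpa using h))
    · intro j _ hj
      rw [hg0 _ (by simpa using hj) (Fin.castSucc_lt_last j).ne]; simp
    · simp
  have hB : 0 ≤ g (z (Fin.last (n + 1))) := by
    rw [Finset.sum_eq_single (Fin.last n)] at h2
    · refine nonneg_of_mul_nonneg_left (by simpa [← two_mul] using h2)
        (hpos (fun i => ((Fin.last n).succAbove i).succ)
          (fun a b h => by simpa using h))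
    · intro j _ hj
      rw [hg0 _ (Fin.succ_ne_zero j) (by simpa [← Fin.succ_last] using hj)]; simp
    · simp
  refine Finset.sum_nonneg fun j _ => ?_
  refine mul_nonneg ?_ (hpos (fun i => k.succAbove (j.succAbove i))
    ((Fin.strictMono_succAbove k).comp (Fin.strictMono_succAbove j))).le
  by_cases hj0 : k.succAbove j = 0
  · have : j = 0 := by
      by_contra h
      exact (Fin.succAbove_ne_zero hk0 h) hj0
    subst this
    rw [hj0]; simpa using hA
  by_cases hjl : k.succAbove j = Fin.last (n + 1)
  · have : j = Fin.last n := by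
      by_contra h
      exact (Fin.succAbove_ne_last hkl h) hjl
    subst this
    rw [hjl]; simpa [← two_mul] using hB
  rw [hg0 _ hj0 hjl]; simp

lemma psum_one {n : ℕ} (j : Fin (n + 1)) : psum (fun _ : Fin n => (1 : ℝ)) j = (j : ℕ) := by
  unfold psum
  rw [Finset.sum_const, Fin.card_filter_val_lt]
  have := j.is_le
  simp [this]

lemma strictMono_add_le {n : ℕ} (s : Fin (n + 1) → ℕ) (hs : StrictMono s) (j : Fin (n + 1)) :
    s 0 + j ≤ s j := by
  induction j using Fin.induction with
  | zero => simp
  | succ i ih =>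
    have := hs (Fin.castSucc_lt_succ (i := i))
    simp at ih ⊢
    omega

lemma exists_insert {n : ℕ} (s : Fin (n + 1) → ℕ) (hs : StrictMono s) (p : ℕ)
    (hp : ∀ j, s j ≠ p) :
    ∃ (z : Fin (n + 2) → ℕ) (k : Fin (n + 2)), StrictMono z ∧ z k = p ∧
      ∀ j, z (k.succAbove j) = s j := by
  classical
  set S : Finset ℕ := Finset.univ.image s with hS
  have hcS : S.card = n + 1 := by
    rw [hS, Finset.card_image_of_injective _ hs.injective]; simp
  have hpS : p ∉ S := by simp [hS, hp]
  have hc : (insert p S).card = n + 2 := by rw [Finset.card_insert_of_notMem hpS, hcS]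
  set z := (insert p S).orderEmbOfFin hc with hz
  have hr : p ∈ Set.range z := by
    rw [hz, Finset.range_orderEmbOfFin]; simp
  obtain ⟨k, hk⟩ := hr
  refine ⟨z, k, z.strictMono, hk, ?_⟩
  have e1 := Finset.orderEmbOfFin_unique hcS (f := fun j => z (k.succAbove j)) (fun j => by
    have : z (k.succAbove j) ∈ insert p S := Finset.orderEmbOfFin_mem _ _ _
    rcases Finset.mem_insert.mp this with h | h
    · exact absurd (z.injective (h.trans hk.symm)) (Fin.succAbove_ne k j)
    · exact h) (z.strictMono.comp (Fin.strictMono_succAbove k))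
  have e2 := Finset.orderEmbOfFin_unique hcS (f := s) (fun j => by simp [hS]) hs
  intro j
  exact congrFun (e1.trans e2.symm) j

lemma discrete_main {n : ℕ} (I : Set ℝ) (hI : I.OrdConnected)
    (ω : Fin n → ℝ → ℝ) (hω : IsPosChebyshev ω I) (f : ℝ → ℝ)
    (hJ : TOmegaConvexOn ω (fun _ => (1 : ℝ)) I f) (x δ : ℝ) (hδ : 0 < δ) :
    ∀ (d : ℕ) (s : Fin (n + 1) → ℕ), StrictMono s → s (Fin.last n) ≤ s 0 + d →
      x + s 0 * δ ∈ I → x + s (Fin.last n) * δ ∈ I →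
      0 ≤ Phi (Fin.snoc ω f : Fin (n + 1) → ℝ → ℝ) (fun j => x + s j * δ) := by
  intro d
  induction d with
  | zero | succ d ih => ?_
  all_goals
    intro s hs hd h0 hl
    by_cases hcons : ∀ j, s j = s 0 + j
    · have := hJ (x + s 0 * δ) h0 δ hδ (by
        rw [psum_one]; convert hl using 1; rw [hcons (Fin.last n)]; push_cast; ring)
      convert this using 2
      ext j
      rw [psum_one, hcons j]; push_cast; ring
    have hgap : ∃ p, s 0 < p ∧ p < s (Fin.last n) ∧ ∀ j, s j ≠ p := by
      by_contra hno
      push Not at hno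
      apply hcons
      have hsurj : Finset.Icc (s 0) (s (Fin.last n)) ⊆ Finset.univ.image s := by
        intro p hp
        rw [Finset.mem_Icc] at hp
        rw [Finset.mem_image]
        rcases hp.1.eq_or_lt with h | h
        · exact ⟨0, by simp, h⟩
        rcases hp.2.eq_or_lt with h' | h'
        · exact ⟨Fin.last n, by simp, h'.symm⟩
        obtain ⟨j, hj⟩ := hno p h h'
        exact ⟨j, by simp, hj⟩
      have hcard := Finset.card_le_card hsurj
      rw [Finset.card_image_of_injective _ hs.injective] at hcard
      simp at hcard
      intro j
      have h1 := strictMono_add_le s hs j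
      have h2 : s j + (n - j) ≤ s (Fin.last n) := by
        have key : ∀ m : ℕ, ∀ hm : (j : ℕ) + m < n + 1, s j + m ≤ s ⟨j + m, hm⟩ := by
          intro m
          induction m with
          | zero => intro hm; simp
          | succ m ihm =>
            intro hm
            have a := ihm (by omega)
            have b := hs (show (⟨j + m, by omega⟩ : Fin (n + 1)) < ⟨j + (m + 1), hm⟩ by
              rw [Fin.lt_def]; simp)
            omega
        have := key (n - j) (by omega)
        convert this using 2
        ext
        simp
        omega
      have := j.is_le
      omega
    obtain ⟨p, hp0, hpl, hp⟩ := hgap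
    have := hd
    first
    | (exfalso; omega)
    | obtain ⟨z, k, hz, hzk, hzs⟩ := exists_insert s hs p hp
      have hk0 : k ≠ 0 := by
        rintro rfl
        have := hz.monotone (Fin.zero_le ((0 : Fin (n + 2)).succAbove 0))
        rw [hzs, hzk] at this
        omega
      have hkl : k ≠ Fin.last (n + 1) := by
        rintro rfl
        have := hz.monotone (Fin.le_last ((Fin.last (n + 1)).succAbove (Fin.last n)))
        rw [hzs, hzk] at this
        omega
      have hz0 : z 0 = s 0 := by
        rw [← hzs 0, Fin.succAbove_ne_zero_zero hk0]
      have hzl : z (Fin.last (n + 1)) = s (Fin.last n) := by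
        rw [← hzs (Fin.last n), Fin.succAbove_ne_last_last hkl]
      have hzI : ∀ j, x + z j * δ ∈ I := by
        intro j
        refine hI.out h0 hl ⟨?_, ?_⟩
        · have : s 0 ≤ z j := hz0 ▸ hz.monotone (Fin.zero_le j)
          gcongr
        · have : z j ≤ s (Fin.last n) := hzl ▸ hz.monotone (Fin.le_last j)
          gcongr
      have hz1 : z 0 < z (Fin.succ 0) := hz (Fin.succ_pos 0)
      have hz2 : z (Fin.castSucc (Fin.last n)) < z (Fin.last (n + 1)) :=
        hz (Fin.castSucc_lt_last _)
      have := Phi_core ω I hω f (fun j => x + z j * δ)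
        (fun a b hab => by
          have : (z a : ℝ) < z b := by exact_mod_cast hz hab
          dsimp only
          gcongr) hzI k hk0 hkl
        (ih (fun j => z j.castSucc) (hz.comp Fin.strictMono_castSucc)
          (by simp only [Fin.castSucc_zero]; omega) (hzI _) (hzI _))
        (ih (fun j => z j.succ) (hz.comp Fin.strictMono_succ)
          (by
            change z (Fin.last (n + 1)) ≤ z (Fin.succ 0) + d
            omega) (hzI _) (hzI _))
      simpa only [hzs] using this

/-- **Corollary 5.** If `f` is `ω`-Jensen convex on the nondegenerate interval `I`
(i.e. `(𝟏ₙ,ω)`-convex), then `f` is `(r,ω)`-convex on `I` for every `n`-tuple `r`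
of positive rationals. -/
theorem rational_tOmegaConvex_of_jensenConvex
    (n : ℕ) (hn : 0 < n) (I : Set ℝ) (hI : I.OrdConnected)
    (hne : ∃ a ∈ I, ∃ b ∈ I, a < b)
    (ω : Fin n → ℝ → ℝ) (hω : IsPosChebyshev ω I) (f : ℝ → ℝ)
    (hJ : TOmegaConvexOn ω (fun _ => (1 : ℝ)) I f) :
    ∀ r : Fin n → ℚ, (∀ i, 0 < r i) →
      TOmegaConvexOn ω (fun i => (r i : ℝ)) I f := by
  intro r hr x hx h hh hend
  set q : ℕ := ∏ i, (r i).den with hq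
  have hq0 : 0 < q := Finset.prod_pos fun i _ => (r i).den_pos
  have hex : ∀ i, ∃ a : ℕ, 0 < a ∧ (r i : ℝ) = a / q := by
    intro i
    obtain ⟨m, hm⟩ : (r i).den ∣ q := Finset.dvd_prod_of_mem _ (Finset.mem_univ i)
    have hm0 : 0 < m := by
      rcases Nat.eq_zero_or_pos m with h | h
      · simp [h] at hm; omega
      · exact h
    have hnum : 0 < (r i).num := Rat.num_pos.mpr (hr i)
    refine ⟨(r i).num.toNat * m, Nat.mul_pos (by omega) hm0, ?_⟩
    have hden : ((r i).den : ℝ) ≠ 0 := by exact_mod_cast (r i).den_pos.ne'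
    have hm' : (m : ℝ) ≠ 0 := by exact_mod_cast hm0.ne'
    have hcast : (((r i).num.toNat : ℕ) : ℝ) = ((r i).num : ℝ) := by
      exact_mod_cast congrArg (Int.cast : ℤ → ℝ) (Int.toNat_of_nonneg hnum.le)
    rw [hm, Rat.cast_def]
    push_cast
    rw [hcast]
    field_simp
  choose a ha har using hex
  have hq' : (q : ℝ) ≠ 0 := by exact_mod_cast hq0.ne'
  set s : Fin (n + 1) → ℕ := fun j =>
    ∑ i ∈ Finset.univ.filter (fun i : Fin n => (i : ℕ) < (j : ℕ)), a i with hs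
  have hps : ∀ j, psum (fun i => (r i : ℝ)) j * h = s j * (h / q) := by
    intro j
    simp only [psum, hs, har]
    rw [← Finset.sum_div]
    push_cast
    ring
  have hsm : StrictMono s := by
    intro j k hjk
    have hjn : (j : ℕ) < n := by have := k.is_le; omega
    refine Finset.sum_lt_sum_of_subset (i := ⟨j, hjn⟩) ?_ ?_ ?_ (ha _) (fun _ _ _ => Nat.zero_le _)
    · intro i hi
      simp only [Finset.mem_filter, Finset.mem_univ, true_and] at hi ⊢
      exact hi.trans hjk
    · simpa using hjk
    · simp
  have hs0 : s 0 = 0 := by simp [hs]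
  simp only [hps] at hend ⊢
  exact discrete_main I hI ω hω f hJ x (h / q) (by positivity) (s (Fin.last n)) s hsm (by omega)
    (by simpa [hs0] using hx) hend
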